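/- Let α = (N; A, B, C, D; X, N⁻, N⁺) be a multiparametric dissipative scattering LSDS, i.e. ‖ζG‖ ≤ 1 for all ζ ∈ T^N. Then for every z in the open unit polydisc D^N the operator I_X − zA is invertible, the transfer function θ_α(z) = zD + zC(I_X − zA)⁻¹zB is holomorphic on D^N, θ_α(0) = 0, and ‖θ_α(z)‖ ≤ 1 for all z ∈ D^N. -/

import Mathlib

open ContinuousLinearMap

noncomputable section

/-- The block operator `[[A, B], [C, D]] : X ⊕ N⁻ → X ⊕ N⁺` (Hilbert space direct sum). -/
def blockOp {X Nm Np : Type*}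
    [NormedAddCommGroup X] [InnerProductSpace ℂ X]
    [NormedAddCommGroup Nm] [InnerProductSpace ℂ Nm]
    [NormedAddCommGroup Np] [InnerProductSpace ℂ Np]
    (A : X →L[ℂ] X) (B : Nm →L[ℂ] X) (C : X →L[ℂ] Np) (D : Nm →L[ℂ] Np) :
    WithLp 2 (X × Nm) →L[ℂ] WithLp 2 (X × Np) :=
  ((WithLp.prodContinuousLinearEquiv 2 ℂ X Np).symm :
      (X × Np) →L[ℂ] WithLp 2 (X × Np)) ∘L
    ((A ∘L ContinuousLinearMap.fst ℂ X Nm + B ∘L ContinuousLinearMap.snd ℂ X Nm).prod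
      (C ∘L ContinuousLinearMap.fst ℂ X Nm + D ∘L ContinuousLinearMap.snd ℂ X Nm)) ∘L
    (WithLp.prodContinuousLinearEquiv 2 ℂ X Nm : WithLp 2 (X × Nm) →L[ℂ] (X × Nm))

/-!
The pencil `z ↦ zG` is linear and the closed polydisc is the convex hull of the torus, so
`‖zG‖ ≤ 1` on `T^N` already forces `‖zG‖ ≤ ‖z‖_∞` on all of `ℂ^N`. For `‖z‖_∞ < 1` the corner `zA`
is thus a strict contraction and `I - zA` is invertible by the Neumann series. The state
`x = (I - zA)⁻¹ zB u` is the one that `zG` reproduces, `zG (x, u) = (x, θ(z) u)`, so the contraction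
estimate at `(x, u)` reads `‖x‖² + ‖θ(z) u‖² ≤ ‖z‖_∞² (‖x‖² + ‖u‖²)`, whence the Schwarz-type bound
`‖θ(z)‖ ≤ ‖z‖_∞`.
-/

section Torus

variable {ι : Type*} [Fintype ι]

lemma opNorm_le_of_forall_norm_apply_eq_one {V : ι → Type*} [∀ i, NormedAddCommGroup (V i)]
    [∀ i, NormedSpace ℝ (V i)] [∀ i, Nontrivial (V i)] {E : Type*} [SeminormedAddCommGroup E]
    [NormedSpace ℝ E] (f : (∀ i, V i) →L[ℝ] E) {M : ℝ}
    (hf : ∀ v : ∀ i, V i, (∀ i, ‖v i‖ = 1) → ‖f v‖ ≤ M) : ‖f‖ ≤ M := by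
  have sphere_subset : Set.univ.pi (fun i => Metric.sphere (0 : V i) 1) ⊆
      f ⁻¹' Metric.closedBall 0 M := fun v hv => by
    simpa using hf v fun i => by simpa using hv i (Set.mem_univ i)
  have hull_subset : Set.univ.pi (fun i => Metric.closedBall (0 : V i) 1) ⊆
      f ⁻¹' Metric.closedBall 0 M := by
    have h := convexHull_min sphere_subset
      ((convex_closedBall (0 : E) M).linear_preimage f.toLinearMap)
    simpa only [convexHull_pi, convexHull_sphere_eq_closedBall _ zero_le_one] using h
  have bound : ∀ v : ∀ i, V i, ‖v‖ ≤ 1 → ‖f v‖ ≤ M := fun v hv => by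
    simpa using hull_subset fun i _ => by simpa using (norm_le_pi_norm v i).trans hv
  have hM : 0 ≤ M := by simpa using bound 0 (by simp)
  exact f.opNorm_le_of_unit_norm hM fun v hv => bound v hv.le

lemma norm_sum_smul_le_of_forall_norm_eq_one {𝕜 E : Type*} [RCLike 𝕜] [SeminormedAddCommGroup E]
    [NormedSpace 𝕜 E] {G : ι → E} {M : ℝ}
    (hG : ∀ ζ : ι → 𝕜, (∀ k, ‖ζ k‖ = 1) → ‖∑ k, ζ k • G k‖ ≤ M) (z : ι → 𝕜) :
    ‖∑ k, z k • G k‖ ≤ M * ‖z‖ := by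
  let : NormedSpace ℝ E := .restrictScalars ℝ 𝕜 E
  have : IsScalarTower ℝ 𝕜 E := .restrictScalars ℝ 𝕜 E
  let L : (ι → 𝕜) →L[𝕜] E := ∑ k, (ContinuousLinearMap.proj k).smulRight (G k)
  have hL (w : ι → 𝕜) : L w = ∑ k, w k • G k := by simp [L]
  have norm_L_le : ‖L.restrictScalars ℝ‖ ≤ M :=
    opNorm_le_of_forall_norm_apply_eq_one _ fun ζ hζ => by simpa [hL] using hG ζ hζ
  simpa only [hL, coe_restrictScalars'] using (L.restrictScalars ℝ).le_of_opNorm_le norm_L_le z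

end Torus

section TransferOperator

variable {𝕜 X U Y : Type*} [NontriviallyNormedField 𝕜]
  [NormedAddCommGroup X] [NormedSpace 𝕜 X] [NormedAddCommGroup U] [NormedSpace 𝕜 U]
  [NormedAddCommGroup Y] [NormedSpace 𝕜 Y]

/-- The transfer operator `D + C (1 - A)⁻¹ B` of a block operator `[[A, B], [C, D]]`, mapping an
input `u` to the output `C x + D u` at the state solving `x = A x + B u`. The inverse is
`Ring.inverse`, which is `0` when `1 - A` is not invertible. With `A`, `B`, `C`, `D` replaced by
`zA`, `zB`, `zC`, `zD` it is the transfer function `θ_α(z)`. -/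
def transferOperator (A : X →L[𝕜] X) (B : U →L[𝕜] X) (C : X →L[𝕜] Y) (D : U →L[𝕜] Y) :
    U →L[𝕜] Y :=
  D + C ∘L Ring.inverse (1 - A) ∘L B

lemma differentiableAt_transferOperator [CompleteSpace X] {E : Type*} [NormedAddCommGroup E]
    [NormedSpace 𝕜 E] {A : E → X →L[𝕜] X} {B : E → U →L[𝕜] X} {C : E → X →L[𝕜] Y}
    {D : E → U →L[𝕜] Y} {z : E} (hA : DifferentiableAt 𝕜 A z) (hB : DifferentiableAt 𝕜 B z)
    (hC : DifferentiableAt 𝕜 C z) (hD : DifferentiableAt 𝕜 D z) (hunit : IsUnit (1 - A z)) :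
    DifferentiableAt 𝕜 (fun w => transferOperator (A w) (B w) (C w) (D w)) z := by
  have hinv : DifferentiableAt 𝕜 (fun w => Ring.inverse (1 - A w)) z :=
    (differentiableAt_inverse hunit).comp (f := fun w => 1 - A w) z (hA.const_sub 1)
  exact hD.add (hC.clm_comp (hinv.clm_comp hB))

end TransferOperator

section BlockOp

variable {X Nm Np : Type*}
  [NormedAddCommGroup X] [InnerProductSpace ℂ X]
  [NormedAddCommGroup Nm] [InnerProductSpace ℂ Nm]
  [NormedAddCommGroup Np] [InnerProductSpace ℂ Np]

lemma blockOp_toLp (A : X →L[ℂ] X) (B : Nm →L[ℂ] X) (C : X →L[ℂ] Np) (D : Nm →L[ℂ] Np)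
    (x : X) (u : Nm) :
    blockOp A B C D (WithLp.toLp 2 (x, u)) = WithLp.toLp 2 (A x + B u, C x + D u) := by
  simp [blockOp]

lemma blockOp_sum_smul {ι : Type*} (s : Finset ι) (A : ι → X →L[ℂ] X) (B : ι → Nm →L[ℂ] X)
    (C : ι → X →L[ℂ] Np) (D : ι → Nm →L[ℂ] Np) (z : ι → ℂ) :
    blockOp (∑ k ∈ s, z k • A k) (∑ k ∈ s, z k • B k) (∑ k ∈ s, z k • C k) (∑ k ∈ s, z k • D k) =
      ∑ k ∈ s, z k • blockOp (A k) (B k) (C k) (D k) := by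
  ext1 ⟨x, u⟩
  apply (WithLp.linearEquiv 2 ℂ (X × Np)).injective
  simp only [sum_apply, map_sum, smul_apply, map_smul, blockOp_toLp]
  ext <;> simp [Prod.fst_sum, Prod.snd_sum, Finset.sum_add_distrib]

lemma norm_blockOp_sum_smul_le {ι : Type*} [Fintype ι] {A : ι → X →L[ℂ] X} {B : ι → Nm →L[ℂ] X}
    {C : ι → X →L[ℂ] Np} {D : ι → Nm →L[ℂ] Np} {M : ℝ}
    (hG : ∀ ζ : ι → ℂ, (∀ k, ‖ζ k‖ = 1) →
      ‖blockOp (∑ k, ζ k • A k) (∑ k, ζ k • B k) (∑ k, ζ k • C k) (∑ k, ζ k • D k)‖ ≤ M)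
    (z : ι → ℂ) :
    ‖blockOp (∑ k, z k • A k) (∑ k, z k • B k) (∑ k, z k • C k) (∑ k, z k • D k)‖ ≤
      M * ‖z‖ := by
  rw [blockOp_sum_smul]
  refine norm_sum_smul_le_of_forall_norm_eq_one (G := fun k => blockOp (A k) (B k) (C k) (D k))
    (fun ζ hζ => ?_) z
  rw [← blockOp_sum_smul]
  exact hG ζ hζ

lemma norm_le_norm_blockOp (A : X →L[ℂ] X) (B : Nm →L[ℂ] X) (C : X →L[ℂ] Np)
    (D : Nm →L[ℂ] Np) : ‖A‖ ≤ ‖blockOp A B C D‖ := by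
  refine opNorm_le_bound _ (opNorm_nonneg _) fun x => ?_
  calc ‖A x‖ ≤ ‖blockOp A B C D (WithLp.toLp 2 (x, 0))‖ := by
        simpa [blockOp_toLp] using WithLp.norm_fst_le _ (WithLp.toLp 2 (A x, C x))
    _ ≤ ‖blockOp A B C D‖ * ‖WithLp.toLp 2 (x, (0 : Nm))‖ := le_opNorm _ _
    _ = ‖blockOp A B C D‖ * ‖x‖ := by simp

lemma blockOp_apply_state {A : X →L[ℂ] X} (hA : IsUnit (1 - A)) (B : Nm →L[ℂ] X)
    (C : X →L[ℂ] Np) (D : Nm →L[ℂ] Np) (u : Nm) :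
    blockOp A B C D (WithLp.toLp 2 (Ring.inverse (1 - A) (B u), u)) =
      WithLp.toLp 2 (Ring.inverse (1 - A) (B u), transferOperator A B C D u) := by
  have state_eq : Ring.inverse (1 - A) (B u) - A (Ring.inverse (1 - A) (B u)) = B u :=
    DFunLike.congr_fun (Ring.mul_inverse_cancel _ hA) (B u)
  rw [blockOp_toLp, ← sub_eq_iff_eq_add'.mp state_eq, add_comm (C _)]
  rfl

lemma norm_transferOperator_le {A : X →L[ℂ] X} {B : Nm →L[ℂ] X} {C : X →L[ℂ] Np}
    {D : Nm →L[ℂ] Np} (hA : IsUnit (1 - A)) (hG : ‖blockOp A B C D‖ ≤ 1) :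
    ‖transferOperator A B C D‖ ≤ ‖blockOp A B C D‖ := by
  set g := ‖blockOp A B C D‖
  refine opNorm_le_bound _ (opNorm_nonneg _) fun u => ?_
  set x := Ring.inverse (1 - A) (B u) with hx
  have energy : ‖x‖ ^ 2 + ‖transferOperator A B C D u‖ ^ 2 ≤ g ^ 2 * (‖x‖ ^ 2 + ‖u‖ ^ 2) := by
    have h := pow_le_pow_left₀ (norm_nonneg _) ((blockOp A B C D).le_opNorm (.toLp 2 (x, u))) 2
    rwa [hx, blockOp_apply_state hA, mul_pow, WithLp.prod_norm_sq_eq_of_L2,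
      WithLp.prod_norm_sq_eq_of_L2] at h
  have state_le : g ^ 2 * ‖x‖ ^ 2 ≤ ‖x‖ ^ 2 :=
    mul_le_of_le_one_left (sq_nonneg _) (pow_le_one₀ (opNorm_nonneg _) hG)
  refine le_of_sq_le_sq ?_ (by positivity)
  linarith [mul_pow g ‖u‖ 2]

end BlockOp

theorem transfer_function_of_multiparam_dissipative_general {ι : Type*} [Fintype ι]
    {X Nm Np : Type*}
    [NormedAddCommGroup X] [InnerProductSpace ℂ X] [CompleteSpace X]
    [NormedAddCommGroup Nm] [InnerProductSpace ℂ Nm]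
    [NormedAddCommGroup Np] [InnerProductSpace ℂ Np]
    (A : ι → (X →L[ℂ] X)) (B : ι → (Nm →L[ℂ] X))
    (C : ι → (X →L[ℂ] Np)) (D : ι → (Nm →L[ℂ] Np))
    (hdis : ∀ ζ : ι → ℂ, (∀ k, ‖ζ k‖ = 1) →
      ‖blockOp (∑ k, ζ k • A k) (∑ k, ζ k • B k) (∑ k, ζ k • C k) (∑ k, ζ k • D k)‖ ≤ 1)
    (θ : (ι → ℂ) → (Nm →L[ℂ] Np))
    (hθ : ∀ z : ι → ℂ, θ z =
      transferOperator (∑ k, z k • A k) (∑ k, z k • B k) (∑ k, z k • C k) (∑ k, z k • D k)) :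
    (∀ z : ι → ℂ, (∀ k, ‖z k‖ < 1) → IsUnit ((1 : X →L[ℂ] X) - ∑ k, z k • A k)) ∧
    DifferentiableOn ℂ θ {z : ι → ℂ | ∀ k, ‖z k‖ < 1} ∧
    (∀ z : ι → ℂ, (∀ k, ‖z k‖ < 1) → ‖θ z‖ ≤ ‖z‖) := by
  have norm_lt_one {z : ι → ℂ} (hz : ∀ k, ‖z k‖ < 1) : ‖z‖ < 1 :=
    (pi_norm_lt_iff zero_lt_one).2 hz
  have norm_pencil_le (z : ι → ℂ) :
      ‖blockOp (∑ k, z k • A k) (∑ k, z k • B k) (∑ k, z k • C k) (∑ k, z k • D k)‖ ≤ ‖z‖ := by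
    simpa only [one_mul] using norm_blockOp_sum_smul_le hdis z
  have isUnit_one_sub (z : ι → ℂ) (hz : ∀ k, ‖z k‖ < 1) :
      IsUnit ((1 : X →L[ℂ] X) - ∑ k, z k • A k) :=
    isUnit_one_sub_of_norm_lt_one <|
      (norm_le_norm_blockOp _ _ _ _).trans_lt ((norm_pencil_le z).trans_lt (norm_lt_one hz))
  refine ⟨isUnit_one_sub, fun z hz => ?_, fun z hz => ?_⟩
  · rw [funext hθ]
    refine DifferentiableAt.differentiableWithinAt ?_
    apply differentiableAt_transferOperator <;> first | fun_prop | exact isUnit_one_sub z hz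
  · rw [hθ]
    exact (norm_transferOperator_le (isUnit_one_sub z hz)
      ((norm_pencil_le z).trans (norm_lt_one hz).le)).trans (norm_pencil_le z)

/-- if `α = (N; A, B, C, D; X, N⁻, N⁺)` is a multiparametric dissipative
scattering LSDS (`‖ζG‖ ≤ 1` for all `ζ ∈ T^N`), then for every `z` in the open unit polydisc
`I_X − zA` is invertible, the transfer function `θ_α(z) = zD + zC (I_X − zA)⁻¹ zB` is
holomorphic on `D^N`, `θ_α(0) = 0`, and `‖θ_α(z)‖ ≤ 1` on `D^N`. -/
theorem transfer_function_of_multiparam_dissipative {Nn : ℕ} {X Nm Np : Type*}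
    [NormedAddCommGroup X] [InnerProductSpace ℂ X] [CompleteSpace X]
    [TopologicalSpace.SeparableSpace X]
    [NormedAddCommGroup Nm] [InnerProductSpace ℂ Nm] [CompleteSpace Nm]
    [TopologicalSpace.SeparableSpace Nm]
    [NormedAddCommGroup Np] [InnerProductSpace ℂ Np] [CompleteSpace Np]
    [TopologicalSpace.SeparableSpace Np]
    (A : Fin Nn → (X →L[ℂ] X)) (B : Fin Nn → (Nm →L[ℂ] X))
    (C : Fin Nn → (X →L[ℂ] Np)) (D : Fin Nn → (Nm →L[ℂ] Np))
    (hdis : ∀ ζ : Fin Nn → ℂ, (∀ k, ‖ζ k‖ = 1) →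
      ‖blockOp (∑ k, ζ k • A k) (∑ k, ζ k • B k) (∑ k, ζ k • C k) (∑ k, ζ k • D k)‖ ≤ 1)
    (θ : (Fin Nn → ℂ) → (Nm →L[ℂ] Np))
    (hθ : ∀ z : Fin Nn → ℂ, θ z =
      ∑ k, z k • D k +
        (∑ k, z k • C k) ∘L (Ring.inverse (1 - ∑ k, z k • A k)) ∘L (∑ k, z k • B k)) :
    (∀ z : Fin Nn → ℂ, (∀ k, ‖z k‖ < 1) → IsUnit ((1 : X →L[ℂ] X) - ∑ k, z k • A k)) ∧
    DifferentiableOn ℂ θ {z : Fin Nn → ℂ | ∀ k, ‖z k‖ < 1} ∧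
    θ 0 = 0 ∧
    (∀ z : Fin Nn → ℂ, (∀ k, ‖z k‖ < 1) → ‖θ z‖ ≤ 1) := by
  obtain ⟨hunit, hdiff, hnorm⟩ :=
    transfer_function_of_multiparam_dissipative_general A B C D hdis θ hθ
  exact ⟨hunit, hdiff, by simpa using hnorm 0, fun z hz =>
    (hnorm z hz).trans ((pi_norm_le_iff_of_nonneg zero_le_one).2 fun k => (hz k).le)⟩
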